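/- Let p be a prime, n ≥ 1, and f ∈ 𝔽_p[x₁,…,xₙ] a polynomial of total degree at most n. Suppose there is a weighting λ such that f has a unique term of maximal λ-weight, and that term is c·x₁x₂⋯xₙ with c ≠ 0. Then Tr(f^{p−1}) = 1; consequently g ↦ Tr(f^{p−1}·g) is a Frobenius splitting of 𝔽_p[x₁,…,xₙ], and the principal ideal ⟨f⟩ is compatibly split by it. -/

import Mathlib

open MvPolynomial

/-- The near-splitting `Tr` on `𝔽_p[x₁,…,xₙ]`: on a monomial `∏ xᵢ^{eᵢ}` it gives
`∏ xᵢ^{(eᵢ+1)/p - 1}` if `p ∣ eᵢ + 1` for all `i`, and `0` otherwise, extended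
`𝔽_p`-linearly (note that `c^{1/p} = c` for `c ∈ 𝔽_p`). -/
noncomputable def Tr (p n : ℕ) (g : MvPolynomial (Fin n) (ZMod p)) :
    MvPolynomial (Fin n) (ZMod p) :=
  ∑ m ∈ g.support,
    if ∀ i, p ∣ (m i + 1) then
      monomial (Finsupp.equivFunOnFinite.symm fun i => (m i + 1) / p - 1) (g.coeff m)
    else 0

/-- A Frobenius splitting is an additive map `φ` with `φ (a^p * b) = a * φ b` and `φ 1 = 1`. -/
def IsFrobeniusSplitting (p : ℕ) {R : Type*} [CommRing R] (φ : R → R) : Prop :=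
  (∀ a b : R, φ (a + b) = φ a + φ b) ∧ (∀ a b : R, φ (a ^ p * b) = a * φ b) ∧ φ 1 = 1

/-- The `λ`-weight of an exponent vector `m` is `∑ᵢ λᵢ·mᵢ`. -/
def wtOf {n : ℕ} (lam : Fin n → ℕ) (m : Fin n →₀ ℕ) : ℕ := ∑ i, lam i * m i

/-- The leading form `init_λ(g)`: the sum of the terms of `g` of maximal `λ`-weight. -/
noncomputable def initForm {R : Type*} [CommRing R] {n : ℕ} (lam : Fin n → ℕ)
    (g : MvPolynomial (Fin n) R) : MvPolynomial (Fin n) R :=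
  ∑ m ∈ g.support.filter (fun m => ∀ m' ∈ g.support, wtOf lam m' ≤ wtOf lam m),
    MvPolynomial.monomial m (g.coeff m)

/-- The initial ideal `init_λ(I)`, spanned by the leading forms of the nonzero
elements of `I`. -/
noncomputable def initIdeal {R : Type*} [CommRing R] {n : ℕ} (lam : Fin n → ℕ)
    (I : Ideal (MvPolynomial (Fin n) R)) : Ideal (MvPolynomial (Fin n) R) :=
  Ideal.span {h | ∃ g ∈ I, g ≠ 0 ∧ initForm lam g = h}

/-!
Comparing coefficients, `Tr g` has at `x^d` the coefficient of `g` at `x^(p • d + (p - 1) • 𝟏)`.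
So if `deg F < p + (p - 1) n`, only `d = 0` can contribute and `Tr F` is the coefficient of
`(x₁⋯xₙ)^(p - 1)` in `F`. For `F = f^(p - 1)` the weight leaves only one way to reach this monomial,
and its coefficient is `c^(p - 1) = 1` by Fermat. The degree bound holds as soon as `deg f ≤ n + 1`.
-/

section NearSplitting

variable {R : Type*} [CommSemiring R] {p : ℕ} {φ : R → R}

/-- A near-splitting is an additive, `p⁻¹`-linear map, that is, a Frobenius splitting without the
normalisation `φ 1 = 1`. -/
structure IsNearSplitting (p : ℕ) (φ : R → R) : Prop where
  map_add : ∀ a b, φ (a + b) = φ a + φ b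
  map_pow_mul : ∀ a b, φ (a ^ p * b) = a * φ b

namespace IsNearSplitting

theorem comp_mul_left (h : IsNearSplitting p φ) (c : R) :
    IsNearSplitting p fun g => φ (c * g) where
  map_add a b := by rw [mul_add, h.map_add]
  map_pow_mul a b := by rw [mul_left_comm, h.map_pow_mul]

theorem isFrobeniusSplitting {R : Type*} [CommRing R] {φ : R → R} (h : IsNearSplitting p φ)
    (h_one : φ 1 = 1) : IsFrobeniusSplitting p φ :=
  ⟨h.map_add, h.map_pow_mul, h_one⟩

theorem map_pow_sub_one_mul_mem_span (h : IsNearSplitting p φ) (hp : p ≠ 0) {f g : R}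
    (hg : g ∈ Ideal.span {f}) : φ (f ^ (p - 1) * g) ∈ Ideal.span {f} := by
  obtain ⟨q, rfl⟩ := Ideal.mem_span_singleton.mp hg
  rw [← mul_assoc, pow_sub_one_mul hp, h.map_pow_mul]
  exact Ideal.mul_mem_right _ _ (Ideal.mem_span_singleton_self f)

end IsNearSplitting

end NearSplitting

section Weight

variable {σ R Γ : Type*} [CommSemiring R] [AddCommMonoid Γ] [PartialOrder Γ]
  {w : (σ →₀ ℕ) →+ Γ} {f g : MvPolynomial σ R} {u v : σ →₀ ℕ}

/-- Every exponent of `f` other than `u` has weight strictly below that of `u`. The exponent `u`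
itself need not occur in `f`, which makes the notion stable under products over any semiring. -/
def IsStrictWeightMax (w : (σ →₀ ℕ) →+ Γ) (f : MvPolynomial σ R) (u : σ →₀ ℕ) : Prop :=
  ∀ m ∈ f.support, m ≠ u → w m < w u

namespace IsStrictWeightMax

theorem weight_le (hf : IsStrictWeightMax w f u) {m : σ →₀ ℕ} (hm : m ∈ f.support) :
    w m ≤ w u := by
  obtain rfl | hne := eq_or_ne m u
  · exact le_rfl
  · exact (hf m hm hne).le

theorem one : IsStrictWeightMax w (1 : MvPolynomial σ R) 0 := by
  classical
  intro m hm hne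
  simp [coeff_one, hne.symm] at hm

variable [IsOrderedCancelAddMonoid Γ]

theorem weight_add_lt (hf : IsStrictWeightMax w f u) (hg : IsStrictWeightMax w g v)
    {a b : σ →₀ ℕ} (ha : a ∈ f.support) (hb : b ∈ g.support) (hne : ¬(a = u ∧ b = v)) :
    w (a + b) < w (u + v) := by
  rw [map_add, map_add]
  by_cases hau : a = u
  · exact add_lt_add_of_le_of_lt (hf.weight_le ha) (hg b hb fun hbv => hne ⟨hau, hbv⟩)
  · exact add_lt_add_of_lt_of_le (hf a ha hau) (hg.weight_le hb)

theorem mul (hf : IsStrictWeightMax w f u) (hg : IsStrictWeightMax w g v) :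
    IsStrictWeightMax w (f * g) (u + v) := by
  classical
  intro m hm hne
  obtain ⟨a, ha, b, hb, rfl⟩ := Finset.mem_add.mp (support_mul f g hm)
  exact hf.weight_add_lt hg ha hb fun ⟨hau, hbv⟩ => hne (hau ▸ hbv ▸ rfl)

theorem uniqueAdd (hf : IsStrictWeightMax w f u) (hg : IsStrictWeightMax w g v) :
    UniqueAdd f.support g.support u v := by
  intro a b ha hb hab
  by_contra hne
  exact (hf.weight_add_lt hg ha hb hne).ne (congrArg w hab)

theorem coeff_mul (hf : IsStrictWeightMax w f u) (hg : IsStrictWeightMax w g v) :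
    (f * g).coeff (u + v) = f.coeff u * g.coeff v :=
  AddMonoidAlgebra.coeff_mul_add_of_uniqueAdd (hf.uniqueAdd hg)

theorem pow (hf : IsStrictWeightMax w f u) (k : ℕ) : IsStrictWeightMax w (f ^ k) (k • u) := by
  induction k with
  | zero => simpa only [pow_zero, zero_smul] using one
  | succ k ih => simpa only [pow_succ, succ_nsmul] using ih.mul hf

theorem coeff_pow (hf : IsStrictWeightMax w f u) (k : ℕ) :
    (f ^ k).coeff (k • u) = f.coeff u ^ k := by
  induction k with
  | zero => simp
  | succ k ih => rw [pow_succ, succ_nsmul, (hf.pow k).coeff_mul hf, ih, pow_succ]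

end IsStrictWeightMax

theorem wtOf_eq_weight {n : ℕ} (lam : Fin n → ℕ) (m : Fin n →₀ ℕ) :
    wtOf lam m = Finsupp.weight lam m := by
  simp [wtOf, Finsupp.weight_apply, Finsupp.sum_fintype, mul_comm]

end Weight

section Trace

variable {p n : ℕ}

/-- The exponent vector `(1,…,1)` of the monomial `x₁⋯xₙ`. -/
noncomputable def onesExp (n : ℕ) : Fin n →₀ ℕ :=
  Finsupp.equivFunOnFinite.symm fun _ => 1

/-- The exponent vector `p • d + (p - 1) • (1,…,1)`: for `p ≠ 0`, the only one whose monomial `Tr`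
sends to `x^d`. -/
noncomputable def trExp (p : ℕ) (d : Fin n →₀ ℕ) : Fin n →₀ ℕ :=
  p • d + (p - 1) • onesExp n

theorem trExp_apply (p : ℕ) (d : Fin n →₀ ℕ) (i : Fin n) :
    trExp p d i = p * d i + (p - 1) := by
  simp [trExp, onesExp]

theorem trExp_zero (p n : ℕ) : trExp p (0 : Fin n →₀ ℕ) = (p - 1) • onesExp n := by
  simp [trExp]

theorem trExp_add (p : ℕ) (s d : Fin n →₀ ℕ) : trExp p (s + d) = p • s + trExp p d := by
  rw [trExp, trExp, smul_add, add_assoc]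

theorem degree_trExp (p : ℕ) (d : Fin n →₀ ℕ) :
    (trExp p d).degree = p * d.degree + (p - 1) * n := by
  simp [Finsupp.degree_eq_sum, trExp_apply, Finset.sum_add_distrib, Finset.mul_sum, mul_comm]

theorem nsmul_le_trExp_iff [NeZero p] {s d : Fin n →₀ ℕ} : p • s ≤ trExp p d ↔ s ≤ d := by
  have hp : 0 < p := Nat.pos_of_neZero p
  refine forall_congr' fun i => ?_
  rw [trExp_apply, Finsupp.smul_apply, smul_eq_mul, mul_comm p (s i), ← Nat.le_div_iff_mul_le hp,
    Nat.mul_add_div hp, Nat.div_eq_of_lt (Nat.sub_lt hp one_pos), add_zero]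

theorem dvd_succ_and_div_sub_one_eq_iff [NeZero p] {a d : ℕ} :
    p ∣ a + 1 ∧ (a + 1) / p - 1 = d ↔ a = p * d + (p - 1) := by
  have hp : 0 < p := Nat.pos_of_neZero p
  have h_succ : a = p * d + (p - 1) ↔ a + 1 = p * (d + 1) := by rw [mul_add]; omega
  rw [h_succ]
  constructor
  · rintro ⟨hdvd, rfl⟩
    have hquot : 0 < (a + 1) / p := Nat.div_pos (Nat.le_of_dvd a.succ_pos hdvd) hp
    rw [Nat.sub_add_cancel hquot, Nat.mul_div_cancel' hdvd]
  · intro h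
    rw [h, Nat.mul_div_cancel_left _ hp]
    exact ⟨dvd_mul_right _ _, rfl⟩

theorem forall_dvd_and_div_sub_one_eq_iff [NeZero p] {m d : Fin n →₀ ℕ} :
    ((∀ i, p ∣ m i + 1) ∧ (Finsupp.equivFunOnFinite.symm fun i => (m i + 1) / p - 1) = d) ↔
      m = trExp p d := by
  simp only [DFunLike.ext_iff, Finsupp.equivFunOnFinite_symm_apply_apply, ← forall_and,
    dvd_succ_and_div_sub_one_eq_iff, trExp_apply]

theorem coeff_Tr [NeZero p] (g : MvPolynomial (Fin n) (ZMod p)) (d : Fin n →₀ ℕ) :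
    (Tr p n g).coeff d = g.coeff (trExp p d) := by
  classical
  simp only [Tr, coeff_sum, apply_ite (coeff d), coeff_monomial, coeff_zero, ← ite_and,
    forall_dvd_and_div_sub_one_eq_iff, Finset.sum_ite_eq', mem_support_iff, ite_not]
  split_ifs with h
  · exact h.symm
  · rfl

theorem Tr_add [NeZero p] (a b : MvPolynomial (Fin n) (ZMod p)) :
    Tr p n (a + b) = Tr p n a + Tr p n b := by
  ext d
  simp only [coeff_Tr, coeff_add]

theorem Tr_monomial_nsmul_mul [NeZero p] (s : Fin n →₀ ℕ) (c : ZMod p)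
    (b : MvPolynomial (Fin n) (ZMod p)) :
    Tr p n (monomial (p • s) c * b) = monomial s c * Tr p n b := by
  ext d
  by_cases hsd : s ≤ d
  · obtain ⟨e, rfl⟩ := exists_add_of_le hsd
    rw [coeff_Tr, trExp_add, coeff_monomial_mul, coeff_monomial_mul, coeff_Tr]
  · rw [coeff_Tr, coeff_monomial_mul', coeff_monomial_mul', if_neg hsd,
      if_neg (nsmul_le_trExp_iff.not.mpr hsd)]

theorem Tr_pow_mul [Fact p.Prime] (a b : MvPolynomial (Fin n) (ZMod p)) :
    Tr p n (a ^ p * b) = a * Tr p n b := by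
  induction a using MvPolynomial.induction_on' with
  | monomial s c => rw [monomial_pow, ZMod.pow_card, Tr_monomial_nsmul_mul]
  | add q r hq hr => rw [add_pow_char, add_mul, Tr_add, hq, hr, add_mul]

theorem isNearSplitting_Tr [Fact p.Prime] : IsNearSplitting p (Tr p n) :=
  ⟨Tr_add, Tr_pow_mul⟩

theorem Tr_eq_C_of_totalDegree_lt [NeZero p] {g : MvPolynomial (Fin n) (ZMod p)}
    (hg : g.totalDegree < p + (p - 1) * n) :
    Tr p n g = C (g.coeff ((p - 1) • onesExp n)) := by
  classical
  ext d
  rw [coeff_Tr, coeff_C]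
  split_ifs with hd
  · rw [← hd, trExp_zero]
  · have hd_pos : 0 < d.degree := Nat.pos_of_ne_zero fun h =>
      hd ((Finsupp.degree_eq_zero_iff d).mp h).symm
    apply coeff_eq_zero_of_totalDegree_lt
    calc g.totalDegree < p + (p - 1) * n := hg
      _ ≤ p * d.degree + (p - 1) * n := by gcongr; exact Nat.le_mul_of_pos_right p hd_pos
      _ = (trExp p d).degree := (degree_trExp p d).symm

theorem Tr_pow_sub_one_eq_one [Fact p.Prime] {Γ : Type*} [AddCommMonoid Γ] [PartialOrder Γ]
    [IsOrderedCancelAddMonoid Γ] {w : (Fin n →₀ ℕ) →+ Γ} {f : MvPolynomial (Fin n) (ZMod p)}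
    (hdeg : f.totalDegree ≤ n + 1) (hmem : onesExp n ∈ f.support)
    (hmax : IsStrictWeightMax w f (onesExp n)) : Tr p n (f ^ (p - 1)) = 1 := by
  have hp : 0 < p := Nat.pos_of_neZero p
  have hpow : (f ^ (p - 1)).totalDegree < p + (p - 1) * n := calc
    (f ^ (p - 1)).totalDegree ≤ (p - 1) * f.totalDegree := totalDegree_pow f (p - 1)
    _ ≤ (p - 1) * (n + 1) := by gcongr
    _ < p + (p - 1) * n := by rw [mul_add]; omega
  rw [Tr_eq_C_of_totalDegree_lt hpow, hmax.coeff_pow,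
    ZMod.pow_card_sub_one_eq_one (mem_support_iff.mp hmem), C_1]

end Trace

theorem stmt_17_general {p : ℕ} (hp : p.Prime) {n : ℕ} {Γ : Type*} [AddCommMonoid Γ]
    [PartialOrder Γ] [IsOrderedCancelAddMonoid Γ] (w : (Fin n →₀ ℕ) →+ Γ)
    (f : MvPolynomial (Fin n) (ZMod p))
    (hdeg : f.totalDegree ≤ n + 1) (hmem : onesExp n ∈ f.support)
    (hmax : IsStrictWeightMax w f (onesExp n)) :
    Tr p n (f ^ (p - 1)) = 1 ∧
      IsFrobeniusSplitting p (fun g => Tr p n (f ^ (p - 1) * g)) ∧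
        ∀ g ∈ Ideal.span {f}, Tr p n (f ^ (p - 1) * g) ∈ Ideal.span {f} := by
  have : Fact p.Prime := ⟨hp⟩
  have h_one : Tr p n (f ^ (p - 1)) = 1 := Tr_pow_sub_one_eq_one hdeg hmem hmax
  refine ⟨h_one, ?_, fun g hg => isNearSplitting_Tr.map_pow_sub_one_mul_mem_span hp.ne_zero hg⟩
  exact (isNearSplitting_Tr.comp_mul_left _).isFrobeniusSplitting (by rwa [mul_one])

/-- if `deg f ≤ n` and, for some weighting `λ`, the unique term of `f` of
maximal `λ`-weight is `c·x₁⋯xₙ` with `c ≠ 0`, then `Tr(f^{p−1}) = 1`; consequently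
`g ↦ Tr(f^{p−1}·g)` is a Frobenius splitting, and `⟨f⟩` is compatibly split by it. -/
theorem stmt_17 {p : ℕ} (hp : p.Prime) {n : ℕ} (hn : 1 ≤ n) (lam : Fin n → ℕ)
    (f : MvPolynomial (Fin n) (ZMod p)) (hdeg : f.totalDegree ≤ n)
    (hmem : (Finsupp.equivFunOnFinite.symm fun _ : Fin n => 1) ∈ f.support)
    (huniq : ∀ m ∈ f.support, m ≠ (Finsupp.equivFunOnFinite.symm fun _ : Fin n => 1) →
      wtOf lam m < wtOf lam (Finsupp.equivFunOnFinite.symm fun _ : Fin n => 1)) :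
    Tr p n (f ^ (p - 1)) = 1 ∧
      IsFrobeniusSplitting p (fun g => Tr p n (f ^ (p - 1) * g)) ∧
        ∀ g ∈ Ideal.span {f}, Tr p n (f ^ (p - 1) * g) ∈ Ideal.span {f} := by
  simp only [wtOf_eq_weight] at huniq
  exact stmt_17_general hp (Finsupp.weight lam) f (Nat.le_succ_of_le hdeg) hmem huniq
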